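/- Proposition 6. Let M, N be positive integers and let μ be an integer with 1 ≤ μ ≤ M+N−1. Set b(z) = q(1−z)/(1−q²z) and c(z) = (1−q²)/(1−q²z). For μ = 1 define A₁ = (w₁' − q w₀), B₁ = −b(w₀'/w₀)(q w₁' − w₀), C₁ = −c(w₀'/w₀)(w₁' − q w₀'). For 2 ≤ μ ≤ M define A_μ = Π_{j=0}^{μ−2} (q w_{j+1} − w_j')(w_{j+1}' − q w_j) · (w_μ' − q w_{μ−1}), B_μ = −b(w₀'/w₀)(q w₁ − w₀)(w₁' − q w₀') · Π_{j=1}^{μ−2} (q w_{j+1} − w_j')(w_{j+1}' − q w_j) · (q w_μ' − w_{μ−1}'), C_μ = −c(w₀'/w₀)(q w₁ − w₀)(w₁' − q w₀') · Π_{j=1}^{μ−2} (q w_{j+1} − w_j')(w_{j+1}' − q w_j) · (w_μ' − q w_{μ−1}). For M+1 ≤ μ ≤ M+N−1 define A_μ = Π_{j=0}^{M−1} (q w_{j+1} − w_j')(w_{j+1}' − q w_j) · Π_{j=M}^{μ−2} (w_{j+1} − q w_j')(q w_{j+1}' − w_j) · (q w_μ' − w_{μ−1}), B_μ = b(w₀'/w₀)(q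 w₁ − w₀)(w₁' − q w₀') · Π_{j=1}^{M−1} (q w_{j+1} − w_j')(w_{j+1}' − q w_j) · Π_{j=M}^{μ−2} (w_{j+1} − q w_j')(q w_{j+1}' − w_j) · (w_μ' − q w_{μ−1}'), C_μ = −c(w₀'/w₀)(q w₁ − w₀)(w₁' − q w₀') · Π_{j=1}^{M−1} (q w_{j+1} − w_j')(w_{j+1}' − q w_j) · Π_{j=M}^{μ−2} (w_{j+1} − q w_j')(q w_{j+1}' − w_j) · (q w_μ' − w_{μ−1}). Then A_μ + B_μ + C_μ ∼ 0 with respect to the pairs (w₁, w₁'), …, (w_{μ−1}, w_{μ−1}') carrying the U_q(ŝl(M|N)) exchange factors; here w₀, w₀' and w_μ' are further free variables, and for μ = 1 the weak equality is the plain identity A₁ + B₁ + C₁ = 0. -/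

import Mathlib

/-- Bosonic exchange factor `H^b(u,v) = -(q²v - u)/(q²u - v)`. -/
noncomputable def Hb (q u v : ℂ) : ℂ := -(q ^ 2 * v - u) / (q ^ 2 * u - v)

/-- Fermionic exchange factor `H^f(u,v) = -(q²u - v)/(q²v - u)`. -/
noncomputable def Hf (q u v : ℂ) : ℂ := -(q ^ 2 * u - v) / (q ^ 2 * v - u)

/-- Exchange factor assignment for `U_q(sl^(M|N))`: bosonic for `j < M`,
the constant `-1` for `j = M`, fermionic for `j > M`. -/
noncomputable def Hex (M : ℕ) (q : ℂ) (j : ℕ) : ℂ → ℂ → ℂ :=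
  if j < M then Hb q else if j = M then fun _ _ => -1 else Hf q

/-- Interchange `w_j` and `w_j'` for every `j ∈ σ`. -/
def swapOn (σ : Finset ℕ) (w w' : ℕ → ℂ) : ℕ → ℂ := fun j => if j ∈ σ then w' j else w j

/-- Weak equality `F ∼ G` with respect to the pairs `(w_j, w_j')`, `j ∈ J`,
carrying exchange factors `H j`. -/
def WeakEq (J : Finset ℕ) (H : ℕ → ℂ → ℂ → ℂ) (w w' : ℕ → ℂ)
    (F G : (ℕ → ℂ) → (ℕ → ℂ) → ℂ) : Prop :=
  ∑ σ ∈ J.powerset, (∏ j ∈ σ, H j (w' j) (w j)) * F (swapOn σ w w') (swapOn σ w' w)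
    = ∑ σ ∈ J.powerset, (∏ j ∈ σ, H j (w' j) (w j)) * G (swapOn σ w w') (swapOn σ w' w)

/-- `b(z) = q(1−z)/(1−q²z)`. -/
noncomputable def bR (q z : ℂ) : ℂ := q * (1 - z) / (1 - q ^ 2 * z)

/-- `c(z) = (1−q²)/(1−q²z)`. -/
noncomputable def cR (q z : ℂ) : ℂ := (1 - q ^ 2) / (1 - q ^ 2 * z)

/-!
Only the pair `(w₀, w₀')` sees the coefficients `b` and `c`, so the claim is one linear relation
between the weak sums `G` of the `A`-type chain and `K` of the `B`-type chain, regarded as functions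
of `(x, x') = (w₀, w₀')`:
`(x - q²x') G(x, x') - (1 - q²) x G(x', x) = q (x - x') K(x', x)`.
It is proved by induction from the right end of the chain. Attaching an edge preserves the relation,
because the sum over the two orders of the new pair, weighted by the exchange factor, recombines the
relation at `(y, y')` with the one at `(y', y)`. The fermionic relation is the bosonic one with `q`
replaced by `q⁻¹`; writing `q` as a ratio `a : b` treats both at once without denominators, and the
constant factor `H^0 = -1` is what allows `a` and `b` to be exchanged along the chain.
-/

/-- The sum over all exchanges of pairs in `J`, weighted by exchange factors, which the two sides
of a weak equality have in common. -/
noncomputable def weakSum (J : Finset ℕ) (H : ℕ → ℂ → ℂ → ℂ) (w w' : ℕ → ℂ)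
    (F : (ℕ → ℂ) → (ℕ → ℂ) → ℂ) : ℂ :=
  ∑ σ ∈ J.powerset, (∏ j ∈ σ, H j (w' j) (w j)) * F (swapOn σ w w') (swapOn σ w' w)

section Transfer

variable {R : Type*} [CommRing R]

/-- The linear relation between `G x x'`, `G x' x` and `K x' x` that is propagated along
the chain. The scalar `c` is `a * b` up to a sign, which changes where the chain passes from
fermionic to bosonic edges. -/
def ExchangeRel (a b c : R) (G K : R → R → R) : Prop :=
  ∀ x x', (b ^ 2 * x - a ^ 2 * x') * G x x' - (b ^ 2 - a ^ 2) * x * G x' x =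
    c * (x - x') * K x' x

theorem exchangeRel_zero (a b c : R) : ExchangeRel a b c 0 0 := by
  simp [ExchangeRel]

/-- The factor attached to the edge joining the pairs `(x, x')` and `(y, y')`. It is homogeneous
in the parameters `(a, b)`, so that `(q, 1)` gives the bosonic and `(1, q)` the fermionic factor. -/
def edgeFactor (a b x x' y y' : R) : R := (a * y - b * x') * (b * y' - a * x)

/-- The factor joining the last pair `(x, x')` to the free variable `z` in `A_μ` and `C_μ`. -/
def endFactor (a b z x _x' : R) : R := b * z - a * x

/-- The factor joining the last pair `(x, x')` to the free variable `z` in `B_μ`. -/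
def dualEndFactor (a b z _x x' : R) : R := a * z - b * x'

theorem exchangeRel_endFactor (a b z : R) :
    ExchangeRel a b (a * b) (endFactor a b z) (dualEndFactor a b z) := by
  intro x x'
  simp only [endFactor, dualEndFactor]
  ring

/-- The operator attaching one more edge on the left of a chain and summing over the two orders of
the pair `(y, y')`, the exchanged one being weighted by `h`. -/
def edgeStep (T : R → R → R → R → R) (h y y' : R) (G : R → R → R) : R → R → R :=
  fun x x' ↦ T x x' y y' * G y y' + h * (T x x' y' y * G y' y)

theorem edgeStep_neg_one_self (T : R → R → R → R → R) (y : R) (G : R → R → R) :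
    edgeStep T (-1) y y G = 0 := by
  ext x x'
  simp [edgeStep]

section IsDomain

variable [IsDomain R] {a b c : R} {G K : R → R → R}

theorem ExchangeRel.edgeStep_same (hGK : ExchangeRel a b c G K) {h y y' : R}
    (hD : a ^ 2 * y' - b ^ 2 * y ≠ 0)
    (hh : h * (a ^ 2 * y' - b ^ 2 * y) = -(a ^ 2 * y - b ^ 2 * y')) :
    ExchangeRel a b c (edgeStep (edgeFactor a b) h y y' G)
      (edgeStep (edgeFactor a b) h y y' K) := by
  -- On the diagonal the weight `h` is `-1` and both sums vanish; off it, the relations for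
  -- `(y, y')` and `(y', y)` give the claim multiplied by `y - y'`.
  obtain rfl | hy := eq_or_ne y y'
  · obtain rfl : h = -1 := mul_right_cancel₀ hD (by rw [hh]; ring)
    simpa only [edgeStep_neg_one_self] using exchangeRel_zero a b c
  · intro x x'
    apply mul_left_cancel₀ (mul_ne_zero hD (sub_ne_zero.2 hy))
    simp only [edgeStep, edgeFactor]
    linear_combination
      (y - y') * ((b ^ 2 * x - a ^ 2 * x') * ((a * y' - b * x') * (b * y - a * x)) * G y' y
        - (b ^ 2 - a ^ 2) * x * ((a * y' - b * x) * (b * y - a * x')) * G y' y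
        - c * (x - x') * ((a * y' - b * x) * (b * y - a * x')) * K y' y) * hh
      - (x - x') * ((a * y - b * x) * (b * y' - a * x')) * (a ^ 2 * y' - b ^ 2 * y) * hGK y' y
      - (x - x') * ((a * y' - b * x) * (b * y - a * x')) * (a ^ 2 * y - b ^ 2 * y') * hGK y y'

theorem ExchangeRel.edgeStep_swap (hGK : ExchangeRel a b c G K) (y y' : R) :
    ExchangeRel b a (-c) (edgeStep (edgeFactor b a) (-1) y y' G)
      (edgeStep (edgeFactor b a) (-1) y y' K) := by
  obtain rfl | hy := eq_or_ne y y'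
  · simpa only [edgeStep_neg_one_self] using exchangeRel_zero b a (-c)
  · intro x x'
    apply mul_left_cancel₀ (sub_ne_zero.2 hy)
    simp only [edgeStep, edgeFactor]
    linear_combination
      (x - x') * ((b * y - a * x) * (a * y' - b * x')) * hGK y' y
      + (x - x') * ((b * y' - a * x) * (a * y - b * x')) * hGK y y'

end IsDomain

/-- The product of `n` edge factors `T k, …, T (k + n - 1)` along the pairs
`(x, x'), (u (k + 1), u' (k + 1)), …, (u (k + n), u' (k + n))`, times the value of `e` at the last
pair. -/
def chain (T : ℕ → R → R → R → R → R) (e : R → R → R) :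
    ℕ → ℕ → R → R → (ℕ → R) → (ℕ → R) → R
  | 0, _, x, x', _, _ => e x x'
  | n + 1, k, x, x', u, u' => T k x x' (u (k + 1)) (u' (k + 1)) *
      chain T e n (k + 1) (u (k + 1)) (u' (k + 1)) u u'

theorem chain_congr (T : ℕ → R → R → R → R → R) (e : R → R → R) (n : ℕ) {k : ℕ} (x x' : R)
    {u u' v v' : ℕ → R} (hu : Set.EqOn u v (Set.Ioi k)) (hu' : Set.EqOn u' v' (Set.Ioi k)) :
    chain T e n k x x' u u' = chain T e n k x x' v v' := by
  induction n generalizing k x x' with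
  | zero => rfl
  | succ n ih =>
    have hk : Set.Ioi (k + 1) ⊆ Set.Ioi k := Set.Ioi_subset_Ioi k.le_succ
    simp only [chain]
    rw [hu k.lt_succ_self, hu' k.lt_succ_self, ih _ _ (hu.mono hk) (hu'.mono hk)]

theorem chain_eq_prod (T : ℕ → R → R → R → R → R) (e : R → R → R) (n k : ℕ) (u u' : ℕ → R) :
    chain T e n k (u k) (u' k) u u' =
      (∏ j ∈ Finset.Ico k (k + n), T j (u j) (u' j) (u (j + 1)) (u' (j + 1))) *
        e (u (k + n)) (u' (k + n)) := by
  induction n generalizing k with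
  | zero => simp [chain]
  | succ n ih =>
    rw [chain, ih, Finset.prod_eq_prod_Ico_succ_bot (by lia : k < k + (n + 1)), mul_assoc,
      Nat.add_right_comm, add_assoc]

end Transfer

section WeakSum

variable {J : Finset ℕ} {H : ℕ → ℂ → ℂ → ℂ} {w w' : ℕ → ℂ}

theorem swapOn_of_notMem {σ : Finset ℕ} {j : ℕ} (hj : j ∉ σ) : swapOn σ w w' j = w j :=
  if_neg hj

theorem swapOn_of_mem {σ : Finset ℕ} {j : ℕ} (hj : j ∈ σ) : swapOn σ w w' j = w' j :=
  if_pos hj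

theorem swapOn_insert_eqOn (σ : Finset ℕ) (k : ℕ) :
    Set.EqOn (swapOn (insert k σ) w w') (swapOn σ w w') {k}ᶜ := by
  intro j hj
  simp [swapOn, Finset.mem_insert, show j ≠ k from hj]

theorem weakSum_const_mul (r : ℂ) (F : (ℕ → ℂ) → (ℕ → ℂ) → ℂ) :
    weakSum J H w w' (fun u u' ↦ r * F u u') = r * weakSum J H w w' F := by
  simp only [weakSum, Finset.mul_sum, mul_left_comm]

theorem weakSum_sub (F G : (ℕ → ℂ) → (ℕ → ℂ) → ℂ) :
    weakSum J H w w' (fun u u' ↦ F u u' - G u u') =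
      weakSum J H w w' F - weakSum J H w w' G := by
  simp only [weakSum, mul_sub, Finset.sum_sub_distrib]

theorem weakSum_congr {F G : (ℕ → ℂ) → (ℕ → ℂ) → ℂ}
    (hFG : ∀ u u', Set.EqOn u w (↑J)ᶜ → Set.EqOn u' w' (↑J)ᶜ → F u u' = G u u') :
    weakSum J H w w' F = weakSum J H w w' G := by
  refine Finset.sum_congr rfl fun σ hσ ↦ ?_
  have hnot {j : ℕ} (hj : j ∈ (↑J : Set ℕ)ᶜ) : j ∉ σ := fun h ↦ hj (Finset.mem_powerset.1 hσ h)
  rw [hFG _ _ (fun _ hj ↦ swapOn_of_notMem (hnot hj)) fun _ hj ↦ swapOn_of_notMem (hnot hj)]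

theorem weakEq_zero_iff {F : (ℕ → ℂ) → (ℕ → ℂ) → ℂ} :
    WeakEq J H w w' F (fun _ _ ↦ 0) ↔ weakSum J H w w' F = 0 := by
  simp [WeakEq, weakSum]

theorem weakSum_insert {k : ℕ} (hk : k ∉ J) {F : ℂ → ℂ → (ℕ → ℂ) → (ℕ → ℂ) → ℂ}
    (hF : ∀ x x' {u u' v v'}, Set.EqOn u v {k}ᶜ → Set.EqOn u' v' {k}ᶜ →
      F x x' u u' = F x x' v v') :
    weakSum (insert k J) H w w' (fun u u' ↦ F (u k) (u' k) u u') =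
      weakSum J H w w' (F (w k) (w' k)) +
        H k (w' k) (w k) * weakSum J H w w' (F (w' k) (w k)) := by
  simp only [weakSum]
  rw [Finset.sum_powerset_insert hk, Finset.mul_sum]
  congr 1 <;> refine Finset.sum_congr rfl fun σ hσ ↦ ?_ <;>
    have hkσ : k ∉ σ := fun h ↦ hk (Finset.mem_powerset.1 hσ h)
  · rw [swapOn_of_notMem hkσ, swapOn_of_notMem hkσ]
  · have hmem := Finset.mem_insert_self k σ
    rw [swapOn_of_mem hmem, swapOn_of_mem hmem, Finset.prod_insert hkσ, mul_assoc,
      hF _ _ (swapOn_insert_eqOn σ k) (swapOn_insert_eqOn σ k)]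

theorem weakSum_chain_succ (T : ℕ → ℂ → ℂ → ℂ → ℂ → ℂ) (e : ℂ → ℂ → ℂ) (n : ℕ) {k : ℕ}
    (hk : k + 1 ∉ J) :
    (fun x x' ↦ weakSum (insert (k + 1) J) H w w' (chain T e (n + 1) k x x')) =
      edgeStep (T k) (H (k + 1) (w' (k + 1)) (w (k + 1))) (w (k + 1)) (w' (k + 1))
        (fun x x' ↦ weakSum J H w w' (chain T e n (k + 1) x x')) := by
  have hsub : Set.Ioi (k + 1) ⊆ {k + 1}ᶜ := fun _ hj ↦ (Set.mem_Ioi.1 hj).ne'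
  ext x x'
  rw [edgeStep, ← weakSum_const_mul, ← weakSum_const_mul]
  exact weakSum_insert hk
    (F := fun y y' u u' ↦ T k x x' y y' * chain T e n (k + 1) y y' u u')
    fun y y' _ _ _ _ hu hu' ↦
      congrArg (T k x x' y y' * ·) (chain_congr T e n y y' (hu.mono hsub) (hu'.mono hsub))

end WeakSum

section Graded

/-- The edge factors along the `U_q(ŝl(M|N))` chain: bosonic up to the `M`-th pair and fermionic
from there on. -/
def gradedEdge (M : ℕ) (q : ℂ) (j : ℕ) : ℂ → ℂ → ℂ → ℂ → ℂ :=
  if j < M then edgeFactor q 1 else edgeFactor 1 q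

/-- The end factor of `A_μ` and `C_μ` when the last pair is `m = μ - 1`. -/
def gradedEnd (M : ℕ) (q : ℂ) (m : ℕ) (z : ℂ) : ℂ → ℂ → ℂ :=
  if m < M then endFactor q 1 z else endFactor 1 q z

/-- The end factor of `B_μ` when the last pair is `m = μ - 1`. It carries the relative sign of
`B_μ` in the bosonic and fermionic cases. -/
def gradedDualEnd (M : ℕ) (q : ℂ) (m : ℕ) (z : ℂ) : ℂ → ℂ → ℂ :=
  if m < M then dualEndFactor q 1 z else -dualEndFactor 1 q z

/-- The exchange relation at the `k`-th edge of the `U_q(ŝl(M|N))` chain. -/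
def GradedExchangeRel (M : ℕ) (q : ℂ) (k : ℕ) : (ℂ → ℂ → ℂ) → (ℂ → ℂ → ℂ) → Prop :=
  if k < M then ExchangeRel q 1 q else ExchangeRel 1 q (-q)

variable {M : ℕ} {q : ℂ}

theorem gradedExchangeRel_gradedEnd (M : ℕ) (q : ℂ) (m : ℕ) (z : ℂ) :
    GradedExchangeRel M q m (gradedEnd M q m z) (gradedDualEnd M q m z) := by
  unfold GradedExchangeRel gradedEnd gradedDualEnd
  split_ifs with hm
  · simpa using exchangeRel_endFactor q 1 z
  · simpa [ExchangeRel] using exchangeRel_endFactor 1 q z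

theorem Hb_mul_cancel {u v : ℂ} (huv : q ^ 2 * u ≠ v) :
    Hb q u v * (q ^ 2 * u - v) = -(q ^ 2 * v - u) :=
  div_mul_cancel₀ _ (sub_ne_zero.2 huv)

theorem Hf_mul_cancel {u v : ℂ} (huv : q ^ 2 * v ≠ u) :
    Hf q u v * (q ^ 2 * v - u) = -(q ^ 2 * u - v) :=
  div_mul_cancel₀ _ (sub_ne_zero.2 huv)

theorem GradedExchangeRel.edgeStep_Hex {k : ℕ} {G K : ℂ → ℂ → ℂ} {y y' : ℂ}
    (hGK : GradedExchangeRel M q (k + 1) G K)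
    (hb : k + 1 < M → q ^ 2 * y' ≠ y) (hf : M < k + 1 → q ^ 2 * y ≠ y') :
    GradedExchangeRel M q k (edgeStep (gradedEdge M q k) (Hex M q (k + 1) y' y) y y' G)
      (edgeStep (gradedEdge M q k) (Hex M q (k + 1) y' y) y y' K) := by
  unfold GradedExchangeRel at hGK ⊢
  unfold gradedEdge Hex
  obtain hk | hk | hk := lt_trichotomy (k + 1) M
  · rw [if_pos hk] at hGK
    simp only [if_pos hk, if_pos (show k < M by lia)]
    have hD := sub_ne_zero.2 (hb hk)
    exact hGK.edgeStep_same (by simpa using hD) (by simpa using Hb_mul_cancel (hb hk))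
  · rw [if_neg hk.not_lt] at hGK
    simp only [if_neg hk.not_lt, if_pos hk, if_pos (show k < M by lia)]
    simpa using hGK.edgeStep_swap y y'
  · rw [if_neg hk.not_gt] at hGK
    simp only [if_neg hk.not_gt, if_neg hk.ne', if_neg (show ¬k < M by lia)]
    have hD := sub_ne_zero.2 (hf hk)
    refine hGK.edgeStep_same (fun h ↦ hD ?_) ?_
    · linear_combination -h
    · linear_combination -Hf_mul_cancel (hf hk)

theorem gradedExchangeRel_weakSum_chain {w w' : ℕ → ℂ} {m : ℕ} (z : ℂ)
    (hden : ∀ j ∈ Finset.Ico 1 (m + 1),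
      (j < M → q ^ 2 * w' j ≠ w j) ∧ (M < j → q ^ 2 * w j ≠ w' j))
    {n k : ℕ} (hm : k + n = m) :
    GradedExchangeRel M q k
      (fun x x' ↦ weakSum (Finset.Ico (k + 1) (m + 1)) (Hex M q) w w'
        (chain (gradedEdge M q) (gradedEnd M q m z) n k x x'))
      (fun x x' ↦ weakSum (Finset.Ico (k + 1) (m + 1)) (Hex M q) w w'
        (chain (gradedEdge M q) (gradedDualEnd M q m z) n k x x')) := by
  induction n generalizing k with
  | zero =>
    obtain rfl : k = m := hm
    simpa [weakSum, chain] using gradedExchangeRel_gradedEnd M q k z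
  | succ n ih =>
    have hIco : Finset.Ico (k + 1) (m + 1) = insert (k + 1) (Finset.Ico (k + 1 + 1) (m + 1)) :=
      (Finset.insert_Ico_add_one_left_eq_Ico (by lia)).symm
    obtain ⟨hb, hf⟩ := hden (k + 1) (by simp; lia)
    rw [hIco, weakSum_chain_succ _ _ _ (by simp), weakSum_chain_succ _ _ _ (by simp)]
    exact (ih (by lia)).edgeStep_Hex hb hf

theorem ExchangeRel.three_term {G K : ℂ → ℂ → ℂ} (hGK : ExchangeRel q 1 q G K) {x x' : ℂ}
    (hx : x ≠ 0) (hxx' : x ≠ q ^ 2 * x') :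
    G x x' - bR q (x' / x) * K x' x - cR q (x' / x) * G x' x = 0 := by
  have hD : x - q ^ 2 * x' ≠ 0 := sub_ne_zero.2 hxx'
  have hden : 1 - q ^ 2 * (x' / x) = (x - q ^ 2 * x') / x := by field_simp
  rw [bR, cR, hden]
  field_simp
  linear_combination hGK x x'

theorem weakEq_chain_three_term {w w' : ℕ → ℂ} {n : ℕ} (hM : 0 < M)
    (hw0 : w 0 ≠ 0) (hw0' : w 0 ≠ q ^ 2 * w' 0)
    (hden : ∀ j ∈ Finset.Ico 1 (n + 1),
      (j < M → q ^ 2 * w' j ≠ w j) ∧ (M < j → q ^ 2 * w j ≠ w' j)) :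
    WeakEq (Finset.Ico 1 (n + 1)) (Hex M q) w w'
      (fun u u' ↦
        chain (gradedEdge M q) (gradedEnd M q n (u' (n + 1))) n 0 (u 0) (u' 0) u u' -
          bR q (u' 0 / u 0) *
            chain (gradedEdge M q) (gradedDualEnd M q n (u' (n + 1))) n 0 (u' 0) (u 0) u u' -
          cR q (u' 0 / u 0) *
            chain (gradedEdge M q) (gradedEnd M q n (u' (n + 1))) n 0 (u' 0) (u 0) u u')
      (fun _ _ ↦ 0) := by
  have hrel := gradedExchangeRel_weakSum_chain (w' (n + 1)) hden (zero_add n)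
  rw [GradedExchangeRel, if_pos hM] at hrel
  rw [weakEq_zero_iff, ← hrel.three_term hw0 hw0']
  simp only [← weakSum_const_mul, ← weakSum_sub]
  refine weakSum_congr fun u u' hu hu' ↦ ?_
  rw [hu (by simp), hu' (x := 0) (by simp), hu' (x := n + 1) (by simp)]

theorem prod_gradedEdge_of_le {k m : ℕ} (hm : m ≤ M) (u u' : ℕ → ℂ) :
    ∏ j ∈ Finset.Ico k m, gradedEdge M q j (u j) (u' j) (u (j + 1)) (u' (j + 1)) =
      ∏ j ∈ Finset.Ico k m, (q * u (j + 1) - u' j) * (u' (j + 1) - q * u j) := by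
  refine Finset.prod_congr rfl fun j hj ↦ ?_
  rw [gradedEdge, if_pos ((Finset.mem_Ico.1 hj).2.trans_le hm), edgeFactor, one_mul, one_mul]

theorem prod_gradedEdge_of_ge {k m : ℕ} (hk : M ≤ k) (u u' : ℕ → ℂ) :
    ∏ j ∈ Finset.Ico k m, gradedEdge M q j (u j) (u' j) (u (j + 1)) (u' (j + 1)) =
      ∏ j ∈ Finset.Ico k m, (u (j + 1) - q * u' j) * (q * u' (j + 1) - u j) := by
  refine Finset.prod_congr rfl fun j hj ↦ ?_
  rw [gradedEdge, if_neg (hk.trans (Finset.mem_Ico.1 hj).1).not_gt, edgeFactor, one_mul, one_mul]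

theorem chain_gradedEdge_zero (hM : 0 < M) (n : ℕ) (e : ℂ → ℂ → ℂ) (x x' : ℂ) (u u' : ℕ → ℂ) :
    chain (gradedEdge M q) e (n + 1) 0 x x' u u' =
      (q * u 1 - x') * (u' 1 - q * x) *
        (∏ j ∈ Finset.Ico 1 (n + 1),
          gradedEdge M q j (u j) (u' j) (u (j + 1)) (u' (j + 1))) *
        e (u (n + 1)) (u' (n + 1)) := by
  rw [chain, zero_add, chain_eq_prod, gradedEdge, if_pos hM, edgeFactor, one_mul, one_mul,
    add_comm 1 n, mul_assoc _ (Finset.prod _ _)]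

theorem chain_gradedEdge_of_lt {n : ℕ} (hn : n + 1 < M) (e : ℂ → ℂ → ℂ) (x x' : ℂ)
    (u u' : ℕ → ℂ) :
    chain (gradedEdge M q) e (n + 1) 0 x x' u u' =
      (q * u 1 - x') * (u' 1 - q * x) *
        (∏ j ∈ Finset.Ico 1 (n + 1), (q * u (j + 1) - u' j) * (u' (j + 1) - q * u j)) *
        e (u (n + 1)) (u' (n + 1)) := by
  rw [chain_gradedEdge_zero (by lia), prod_gradedEdge_of_le hn.le]

theorem chain_gradedEdge_of_ge {n : ℕ} (hM : 0 < M) (hn : M ≤ n + 1) (e : ℂ → ℂ → ℂ)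
    (x x' : ℂ) (u u' : ℕ → ℂ) :
    chain (gradedEdge M q) e (n + 1) 0 x x' u u' =
      (q * u 1 - x') * (u' 1 - q * x) *
        (∏ j ∈ Finset.Ico 1 M, (q * u (j + 1) - u' j) * (u' (j + 1) - q * u j)) *
        (∏ j ∈ Finset.Ico M (n + 1), (u (j + 1) - q * u' j) * (q * u' (j + 1) - u j)) *
        e (u (n + 1)) (u' (n + 1)) := by
  rw [chain_gradedEdge_zero hM, ← Finset.prod_Ico_consecutive _ hM hn,
    prod_gradedEdge_of_le le_rfl, prod_gradedEdge_of_ge le_rfl]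
  simp only [mul_assoc]

end Graded

/-- Proposition 6: `A_μ + B_μ + C_μ ∼ 0` with respect to the pairs
`(w₁, w₁'), …, (w_{μ−1}, w_{μ−1}')` carrying the `U_q(sl^(M|N))` exchange factors;
for `μ = 1` this is the plain identity `A₁ + B₁ + C₁ = 0`. -/
theorem proposition6 (M N : ℕ) (hM : 1 ≤ M) (hN : 1 ≤ N)
    (μ : ℕ) (hμ1 : 1 ≤ μ) (hμ2 : μ ≤ M + N - 1)
    (q : ℂ) (hq : q ≠ 0) (hq2 : q ^ 2 ≠ 1) (w w' : ℕ → ℂ)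
    (hw0 : w 0 ≠ 0) (hw0' : w 0 ≠ q ^ 2 * w' 0)
    (hden : ∀ j ∈ Finset.Ico 1 μ,
      (j < M → q ^ 2 * w' j ≠ w j) ∧ (M < j → q ^ 2 * w j ≠ w' j)) :
    WeakEq (Finset.Ico 1 μ) (Hex M q) w w'
      (fun u u' =>
        if μ = 1 then
          (u' 1 - q * u 0) + (-(bR q (u' 0 / u 0)) * (q * u' 1 - u 0)) +
            (-(cR q (u' 0 / u 0)) * (u' 1 - q * u' 0))
        else if μ ≤ M then
          (∏ j ∈ Finset.range (μ - 1), (q * u (j + 1) - u' j) * (u' (j + 1) - q * u j)) *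
              (u' μ - q * u (μ - 1)) +
            (-(bR q (u' 0 / u 0)) * ((q * u 1 - u 0) * (u' 1 - q * u' 0)) *
              (∏ j ∈ Finset.Ico 1 (μ - 1),
                (q * u (j + 1) - u' j) * (u' (j + 1) - q * u j)) *
              (q * u' μ - u' (μ - 1))) +
            (-(cR q (u' 0 / u 0)) * ((q * u 1 - u 0) * (u' 1 - q * u' 0)) *
              (∏ j ∈ Finset.Ico 1 (μ - 1),
                (q * u (j + 1) - u' j) * (u' (j + 1) - q * u j)) *
              (u' μ - q * u (μ - 1)))
        else
          (∏ j ∈ Finset.range M, (q * u (j + 1) - u' j) * (u' (j + 1) - q * u j)) *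
              (∏ j ∈ Finset.Ico M (μ - 1),
                (u (j + 1) - q * u' j) * (q * u' (j + 1) - u j)) *
              (q * u' μ - u (μ - 1)) +
            (bR q (u' 0 / u 0) * ((q * u 1 - u 0) * (u' 1 - q * u' 0)) *
              (∏ j ∈ Finset.Ico 1 M, (q * u (j + 1) - u' j) * (u' (j + 1) - q * u j)) *
              (∏ j ∈ Finset.Ico M (μ - 1),
                (u (j + 1) - q * u' j) * (q * u' (j + 1) - u j)) *
              (u' μ - q * u' (μ - 1))) +
            (-(cR q (u' 0 / u 0)) * ((q * u 1 - u 0) * (u' 1 - q * u' 0)) *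
              (∏ j ∈ Finset.Ico 1 M, (q * u (j + 1) - u' j) * (u' (j + 1) - q * u j)) *
              (∏ j ∈ Finset.Ico M (μ - 1),
                (u (j + 1) - q * u' j) * (q * u' (j + 1) - u j)) *
              (q * u' μ - u (μ - 1))))
      (fun _ _ => 0) := by
  obtain ⟨n, rfl⟩ := Nat.exists_eq_add_of_le' hμ1
  convert weakEq_chain_three_term hM hw0 hw0' hden using 3 with u u'
  rcases n with _ | n
  · simp only [chain, gradedEnd, gradedDualEnd, if_pos (show 0 < M from hM), endFactor,
      dualEndFactor, zero_add, if_true]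
    ring
  rw [if_neg (by lia)]
  split_ifs with hn
  · have hn' : n + 1 < M := hn
    simp only [chain_gradedEdge_of_lt hn', gradedEnd, gradedDualEnd, if_pos hn', endFactor,
      dualEndFactor, Nat.add_sub_cancel, Finset.range_eq_Ico,
      Finset.prod_eq_prod_Ico_succ_bot n.succ_pos]
    ring
  · have hn' : ¬n + 1 < M := hn
    simp only [chain_gradedEdge_of_ge hM (not_lt.1 hn'), gradedEnd, gradedDualEnd, if_neg hn',
      endFactor, dualEndFactor, Nat.add_sub_cancel, Finset.range_eq_Ico,
      Finset.prod_eq_prod_Ico_succ_bot hM, Pi.neg_apply]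
    ring
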